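/- Let τ and τ' be points of the upper half-plane ℍ ⊂ ℂ. Let w₁ : ℂ → ℂ be the unique ℝ-linear map with w₁(1) = 1 and w₁(τ) = τ', and let w₂ : ℂ → ℂ be the unique ℝ-linear map with w₂(1) = 1 and w₂(τ') = τ. Then log ‖w₁‖ + log ‖w₂‖ = dist(τ, τ'), where ‖·‖ denotes the operator norm with respect to the complex absolute value and dist is the hyperbolic (Poincaré) distance on ℍ. (This is the statement that the symmetrization of the Belkhirat–Papadopoulos–Troyanov weak metric κ' coincides with the hyperbolic metric under the standard identification of the Teichmüller space of the torus with ℍ.) -/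

import Mathlib

open scoped ComplexConjugate in
theorem aux_norm (w : ℂ →L[ℝ] ℂ) (p q : ℂ) (h : ∀ z, w z = p * z + q * conj z) :
    ‖w‖ = ‖p‖ + ‖q‖ := by
  apply le_antisymm
  · refine w.opNorm_le_bound (by positivity) fun z => ?_
    rw [h]
    refine (norm_add_le _ _).trans (le_of_eq ?_)
    simp [add_mul]
  · set θ : ℝ := (q.arg - p.arg) / 2 with hθ
    have hu : ‖Complex.exp (θ * Complex.I)‖ = 1 := Complex.norm_exp_ofReal_mul_I θ
    have h1 := w.le_opNorm (Complex.exp (θ * Complex.I))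
    rw [hu, mul_one, h] at h1
    refine le_trans (le_of_eq ?_) h1
    have hc : conj (Complex.exp (θ * Complex.I)) = Complex.exp (-θ * Complex.I) := by
      rw [← Complex.exp_conj]; simp
    have e1 : p * Complex.exp (θ * Complex.I)
        = ‖p‖ * Complex.exp (((p.arg + q.arg) / 2 : ℝ) * Complex.I) := by
      conv_lhs => rw [← Complex.norm_mul_exp_arg_mul_I p]
      rw [mul_assoc, ← Complex.exp_add]
      congr 2
      rw [hθ]; push_cast; ring
    have e2 : q * Complex.exp (-θ * Complex.I)
        = ‖q‖ * Complex.exp (((p.arg + q.arg) / 2 : ℝ) * Complex.I) := by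
      conv_lhs => rw [← Complex.norm_mul_exp_arg_mul_I q]
      rw [mul_assoc, ← Complex.exp_add]
      congr 2
      rw [hθ]; push_cast; ring
    rw [hc, e1, e2, ← add_mul, norm_mul, Complex.norm_exp_ofReal_mul_I, mul_one,
      ← Complex.ofReal_add, Complex.norm_of_nonneg (by positivity)]

open scoped ComplexConjugate in
theorem aux_w (τ τ' : UpperHalfPlane) (w : ℂ →L[ℝ] ℂ)
    (h1 : w 1 = 1) (h2 : w (τ : ℂ) = (τ' : ℂ)) :
    ‖w‖ = (dist (τ' : ℂ) τ + dist (τ' : ℂ) (conj (τ : ℂ))) / (2 * τ.im) := by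
  have hpos := τ.im_pos
  have hne : (τ.im : ℂ) ≠ 0 := by exact_mod_cast hpos.ne'
  have hw : ∀ z : ℂ, w z = z.re + z.im * w Complex.I := fun z => by
    have : z = z.re • (1 : ℂ) + z.im • Complex.I := by
      simp [Complex.re_add_im]
    conv_lhs => rw [this]
    rw [map_add, map_smul, map_smul, h1]
    simp
  have hτ := hw τ
  rw [h2] at hτ
  have ha : w Complex.I = ((τ' : ℂ) - τ.re) / τ.im := by
    rw [eq_div_iff hne, hτ]
    simp [mul_comm]
  have hre : (τ : ℂ) = τ.re + τ.im * Complex.I := (Complex.re_add_im (τ : ℂ)).symm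
  have hcj : conj (τ : ℂ) = τ.re - τ.im * Complex.I := by
    rw [hre]; simp [sub_eq_add_neg]
  have hI := Complex.I_mul_I
  rw [aux_norm w (-Complex.I * (((τ' : ℂ) - conj (τ : ℂ)) / ((2 * τ.im : ℝ) : ℂ)))
    (Complex.I * (((τ' : ℂ) - τ) / ((2 * τ.im : ℝ) : ℂ)))]
  · simp only [norm_mul, norm_neg, Complex.norm_I, one_mul, norm_div, dist_eq_norm,
      Complex.norm_of_nonneg (show (0 : ℝ) ≤ 2 * τ.im by positivity)]
    ring
  · intro z
    rw [hw z, ha, hcj]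
    have hz : conj z = z.re - z.im * Complex.I := by
      apply Complex.ext <;> simp
    rw [hz]
    conv_rhs => rw [← Complex.re_add_im z]
    rw [hre]
    simp only [Complex.add_re, Complex.add_im, Complex.ofReal_re, Complex.ofReal_im,
      Complex.mul_re, Complex.mul_im, Complex.I_re, Complex.I_im]
    push_cast
    field_simp
    ring_nf
    simp only [Complex.I_sq]
    ring

/-- The symmetrization of the Belkhirat–Papadopoulos–Troyanov weak metric κ' coincides
with the hyperbolic metric: for the affine maps `w₁ : τ → τ'` and `w₂ : τ' → τ` fixing the
lattice generator 1, `log ‖w₁‖ + log ‖w₂‖ = dist τ τ'`. -/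
theorem stmt_15 (τ τ' : UpperHalfPlane) (w₁ w₂ : ℂ →L[ℝ] ℂ)
    (h11 : w₁ 1 = 1) (h12 : w₁ (τ : ℂ) = (τ' : ℂ))
    (h21 : w₂ 1 = 1) (h22 : w₂ (τ' : ℂ) = (τ : ℂ)) :
    Real.log ‖w₁‖ + Real.log ‖w₂‖ = dist τ τ' := by
  have n1 : ‖w₁‖ ≠ 0 := by
    intro h
    rw [norm_eq_zero] at h
    simp [h] at h11
  have n2 : ‖w₂‖ ≠ 0 := by
    intro h
    rw [norm_eq_zero] at h
    simp [h] at h21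
  rw [← Real.log_mul n1 n2, ← Real.log_exp (dist τ τ')]
  congr 1
  have e1 := aux_w τ τ' w₁ h11 h12
  have e2 := aux_w τ' τ w₂ h21 h22
  have hp := τ.im_pos
  have hp' := τ'.im_pos
  have hs : Real.sqrt (τ.im * τ'.im) ^ 2 = τ.im * τ'.im := Real.sq_sqrt (by positivity)
  have hc : dist (τ' : ℂ) ((starRingEnd ℂ) (τ : ℂ)) = dist (τ : ℂ) ((starRingEnd ℂ) (τ' : ℂ)) := by
    rw [← Complex.dist_conj_conj, Complex.conj_conj, dist_comm]
  have e3 : Real.exp (dist τ τ') = Real.exp (dist τ τ' / 2) ^ 2 := by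
    rw [← Real.exp_nat_mul]; congr 1; push_cast; ring
  rw [e3, UpperHalfPlane.exp_half_dist, div_pow, mul_pow, hs, e1, e2, hc,
    dist_comm (τ' : ℂ) (τ : ℂ)]
  field_simp
  try ring
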